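/- Let c : ℝ → ℝ be measurable satisfying [H1] and [H2], and let k ∈ ℂ with Im k ≥ 0. Then there exists a unique function u₁ : ℝ → ℂ that is continuously differentiable with locally absolutely continuous derivative, satisfies u₁''(x) + (k²/c(x)²) u₁(x) = 0 for a.e. x ∈ ℝ, and satisfies e^{-ikx} u₁(x) → 1 as x → +∞. Similarly, there exists a unique function u₂ : ℝ → ℂ with the same regularity, satisfying the same equation a.e. and e^{ikx} u₂(x) → 1 as x → -∞. -/

import Mathlib

open MeasureTheory Filter Topology

noncomputable section

/-- Hypothesis [H1]: `c` is essentially bounded below away from `0` and bounded above. -/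
def HypH1 (c : ℝ → ℝ) : Prop :=
  ∃ c₀ > (0 : ℝ), ∃ cM > (0 : ℝ), ∀ᵐ x : ℝ, c₀ < c x ∧ c x ≤ cM

/-- Hypothesis [H1] with explicit constants `c₀`, `cM`. -/
def HypH1c (c : ℝ → ℝ) (c₀ cM : ℝ) : Prop :=
  0 < c₀ ∧ 0 < cM ∧ ∀ᵐ x : ℝ, c₀ < c x ∧ c x ≤ cM

/-- Hypothesis [H2]: `|c(x) - 1| ≤ C ⟨x⟩^{-1-δ}` almost everywhere. -/
def HypH2 (c : ℝ → ℝ) : Prop :=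
  ∃ C > (0 : ℝ), ∃ δ > (0 : ℝ),
    ∀ᵐ x : ℝ, |c x - 1| ≤ C * (1 + x ^ 2) ^ (-(1 + δ) / 2)

/-- `u` is continuously differentiable, its derivative is locally absolutely continuous,
and `u'' + (k²/c²) u = 0` holds almost everywhere (equivalently, the integral formulation
of the second-order equation holds). -/
def SolvesHelmholtz (c : ℝ → ℝ) (k : ℂ) (u : ℝ → ℂ) : Prop :=
  ContDiff ℝ 1 u ∧
  ∀ a b : ℝ, deriv u b = deriv u a + ∫ x in a..b, -(k ^ 2 / ((c x : ℂ) ^ 2)) * u x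

/-- The Jost solution from `+∞` at `k` : `e^{-ikx} u(x) → 1` as `x → +∞`. -/
def IsJostPlus (c : ℝ → ℝ) (k : ℂ) (u : ℝ → ℂ) : Prop :=
  SolvesHelmholtz c k u ∧
  Tendsto (fun x : ℝ => Complex.exp (-(Complex.I * k * (x : ℂ))) * u x) atTop (𝓝 1)

/-- The Jost solution from `-∞` at `k` : `e^{ikx} u(x) → 1` as `x → -∞`. -/
def IsJostMinus (c : ℝ → ℝ) (k : ℂ) (u : ℝ → ℂ) : Prop :=
  SolvesHelmholtz c k u ∧
  Tendsto (fun x : ℝ => Complex.exp (Complex.I * k * (x : ℂ)) * u x) atBot (𝓝 1)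

/-- `q = 1 - 1/c²`. -/
def qfun (c : ℝ → ℝ) (x : ℝ) : ℝ := 1 - 1 / (c x) ^ 2

/-- `Q = 1 - 1/c`. -/
def Qfun (c : ℝ → ℝ) (x : ℝ) : ℝ := 1 - 1 / c x

/-!
Put `β = ik`, so that `Re β ≤ 0`, and `q = 1 - 1/c²`, which is integrable. The equation reads
`u'' = β² (1 - q) u`. Writing `u₁ = e^{βx} m` turns it, together with the normalisation at `+∞`,
into a Volterra equation on `(x, ∞)` for `m` whose kernel is bounded by `|β| |q(t)|`. With
`h = |β| |q|`, its integral operator is a contraction in the sup norm weighted by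
`exp (-2 ∫_x^∞ h)`.

For uniqueness, let `w` be the difference of two solutions with the same normalisation. Then
`e^{2βx} w / u₁` tends to `0` while its derivative tends to the Wronskian of `u₁` and `w`. So the
Wronskian vanishes, `w` is a multiple of `u₁`, and the normalisation forces `w = 0`.

The solution `u₂` is the reflection of the solution `u₁` for `x ↦ c (-x)`.
-/

section Primitive

open Set

lemma absolutelyContinuousOnInterval_of_dist_le {X Y : Type*} [PseudoMetricSpace X]
    [PseudoMetricSpace Y] {F : ℝ → X} {G : ℝ → Y} {a b : ℝ}
    (hG : AbsolutelyContinuousOnInterval G a b)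
    (h : ∀ x ∈ uIcc a b, ∀ y ∈ uIcc a b, dist (F x) (F y) ≤ dist (G x) (G y)) :
    AbsolutelyContinuousOnInterval F a b := by
  rw [absolutelyContinuousOnInterval_iff] at hG ⊢
  refine fun ε hε => (hG ε hε).imp fun δ hδ => ⟨hδ.1, fun I hI hlen => ?_⟩
  refine (Finset.sum_le_sum fun i hi => ?_).trans_lt (hδ.2 I hI hlen)
  exact h _ (hI.1 i hi).1 _ (hI.1 i hi).2

lemma locallyIntegrable_of_forall_intervalIntegrable {E : Type*} [NormedAddCommGroup E]
    {f : ℝ → E} (hf : ∀ a b, IntervalIntegrable f volume a b) : LocallyIntegrable f := by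
  refine fun x => ⟨Icc (x - 1) (x + 1), Icc_mem_nhds (by linarith) (by linarith), ?_⟩
  exact (intervalIntegrable_iff_integrableOn_Icc_of_le (by linarith)).1 (hf _ _)

variable {E : Type*} [NormedAddCommGroup E] [NormedSpace ℝ E]

/-- `F` is a locally absolutely continuous primitive of the locally integrable function `f`. Local
absolute continuity is encoded by the fundamental theorem of calculus rather than by
`AbsolutelyContinuousOnInterval`, see `IsPrimitive.of_ae_hasDerivAt` for the comparison. -/
structure IsPrimitive (F f : ℝ → E) : Prop where
  intervalIntegrable : ∀ a b, IntervalIntegrable f volume a b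
  integral_eq_sub : ∀ a b, ∫ x in a..b, f x = F b - F a

namespace IsPrimitive

variable {F G f g : ℝ → E}

lemma eq_add_integral (hF : IsPrimitive F f) (a : ℝ) : F = fun x => F a + ∫ t in a..x, f t := by
  funext x
  rw [hF.integral_eq_sub, add_sub_cancel]

lemma continuous (hF : IsPrimitive F f) : Continuous F := by
  rw [hF.eq_add_integral 0]
  exact continuous_const.add (intervalIntegral.continuous_primitive hF.intervalIntegrable 0)

lemma integral (hf : ∀ a b, IntervalIntegrable f volume a b) (a : ℝ) :
    IsPrimitive (fun x => ∫ t in a..x, f t) f :=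
  ⟨hf, fun b c => (intervalIntegral.integral_interval_sub_left (hf a c) (hf a b)).symm⟩

lemma absolutelyContinuousOnInterval (hF : IsPrimitive F f) (a b : ℝ) :
    AbsolutelyContinuousOnInterval F a b := by
  have hnorm := IsPrimitive.integral (fun a b => (hF.intervalIntegrable a b).norm) a
  refine absolutelyContinuousOnInterval_of_dist_le
    ((hF.intervalIntegrable a b).norm.absolutelyContinuousOnInterval_intervalIntegral
      left_mem_uIcc) fun x _ y _ => ?_
  rw [dist_comm, dist_eq_norm, ← hF.integral_eq_sub, dist_comm, Real.dist_eq,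
    ← hnorm.integral_eq_sub]
  exact intervalIntegral.norm_integral_le_abs_integral_norm

lemma congr_deriv (hF : IsPrimitive F f) (hfg : ∀ x, f x = g x) : IsPrimitive F g :=
  (funext hfg : f = g) ▸ hF

protected lemma add (hF : IsPrimitive F f) (hG : IsPrimitive G g) :
    IsPrimitive (fun x => F x + G x) (fun x => f x + g x) where
  intervalIntegrable a b := (hF.intervalIntegrable a b).add (hG.intervalIntegrable a b)
  integral_eq_sub a b := by
    rw [intervalIntegral.integral_add (hF.intervalIntegrable a b) (hG.intervalIntegrable a b),
      hF.integral_eq_sub, hG.integral_eq_sub, add_sub_add_comm]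

protected lemma neg (hF : IsPrimitive F f) : IsPrimitive (fun x => -F x) (fun x => -f x) where
  intervalIntegrable a b := (hF.intervalIntegrable a b).neg
  integral_eq_sub a b := by
    rw [intervalIntegral.integral_neg, hF.integral_eq_sub, neg_sub_neg, neg_sub]

protected lemma sub (hF : IsPrimitive F f) (hG : IsPrimitive G g) :
    IsPrimitive (fun x => F x - G x) (fun x => f x - g x) := by
  simpa only [sub_eq_add_neg] using hF.add hG.neg

protected lemma prodMk {E' : Type*} [NormedAddCommGroup E'] [NormedSpace ℝ E'] [CompleteSpace E]
    [CompleteSpace E'] {F' f' : ℝ → E'} (hF : IsPrimitive F f) (hF' : IsPrimitive F' f') :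
    IsPrimitive (fun x => (F x, F' x)) (fun x => (f x, f' x)) where
  intervalIntegrable a b := ⟨(hF.intervalIntegrable a b).1.prodMk (hF'.intervalIntegrable a b).1,
    (hF.intervalIntegrable a b).2.prodMk (hF'.intervalIntegrable a b).2⟩
  integral_eq_sub a b := by
    have h := hF.intervalIntegrable a b
    have h' := hF'.intervalIntegrable a b
    rw [Prod.mk_sub_mk, ← hF.integral_eq_sub, ← hF'.integral_eq_sub]
    simp only [intervalIntegral, integral_pair h.1 h'.1, integral_pair h.2 h'.2, Prod.mk_sub_mk]

lemma eventually_eq_zero_of_norm_le (hF : IsPrimitive F f) {a : ℝ → ℝ} (ha_nonneg : ∀ x, 0 ≤ a x)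
    (ha : ∀ x y, IntervalIntegrable a volume x y) (hle : ∀ x, ‖f x‖ ≤ a x * ‖F x‖) {x₀ : ℝ}
    (hx₀ : F x₀ = 0) : ∀ᶠ x in 𝓝 x₀, F x = 0 := by
  have hA : Tendsto (fun x => |∫ t in x₀..x, a t|) (𝓝 x₀) (𝓝 0) := by
    simpa only [intervalIntegral.integral_same, abs_zero] using
      (intervalIntegral.continuous_primitive ha x₀).abs.tendsto x₀
  obtain ⟨ε, hε, hAε⟩ :=
    Metric.nhds_basis_closedBall.eventually_iff.1 (hA.eventually_lt_const one_pos)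
  obtain ⟨y, hy, hmax⟩ := (isCompact_closedBall x₀ ε).exists_isMaxOn
    ⟨x₀, Metric.mem_closedBall_self hε.le⟩ hF.continuous.norm.continuousOn
  have hsub : uIcc x₀ y ⊆ Metric.closedBall x₀ ε :=
    (convex_closedBall x₀ ε).ordConnected.uIcc_subset (Metric.mem_closedBall_self hε.le) hy
  have hFy : ‖F y‖ ≤ |∫ t in x₀..y, a t| * ‖F y‖ :=
    calc ‖F y‖ = ‖∫ t in x₀..y, f t‖ := by rw [hF.integral_eq_sub, hx₀, sub_zero]
      _ ≤ |∫ t in x₀..y, a t * ‖F y‖| := by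
          refine intervalIntegral.norm_integral_le_abs_of_norm_le ?_ ((ha x₀ y).mul_const _)
          filter_upwards [ae_restrict_mem measurableSet_uIoc] with t ht
          exact (hle t).trans (mul_le_mul_of_nonneg_left
            (hmax (hsub (uIoc_subset_uIcc ht))) (ha_nonneg t))
      _ = |∫ t in x₀..y, a t| * ‖F y‖ := by
          rw [intervalIntegral.integral_mul_const, abs_mul, abs_norm]
  have hy_zero : ‖F y‖ = 0 := by
    by_contra hne
    exact (hFy.trans_lt (mul_lt_of_lt_one_left ((norm_nonneg _).lt_of_ne' hne) (hAε hy))).false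
  filter_upwards [Metric.closedBall_mem_nhds x₀ hε] with x hx
  exact norm_le_zero_iff.1 ((hmax hx).trans_eq hy_zero)

theorem eq_zero_of_norm_le (hF : IsPrimitive F f) {a : ℝ → ℝ} (ha_nonneg : ∀ x, 0 ≤ a x)
    (ha : ∀ x y, IntervalIntegrable a volume x y) (hle : ∀ x, ‖f x‖ ≤ a x * ‖F x‖) {x₀ : ℝ}
    (hx₀ : F x₀ = 0) (x : ℝ) : F x = 0 := by
  have hclopen : IsClopen {x | F x = 0} :=
    ⟨isClosed_eq hF.continuous continuous_const, isOpen_iff_mem_nhds.2 fun _ hx =>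
      hF.eventually_eq_zero_of_norm_le ha_nonneg ha hle hx⟩
  exact (hclopen.eq_univ ⟨x₀, hx₀⟩).ge (mem_univ x)

lemma integral_Ioi (hf : ∀ a, IntegrableOn f (Ioi a)) :
    IsPrimitive (fun x => ∫ t in Ioi x, f t) (fun x => -f x) where
  intervalIntegrable a b :=
    (intervalIntegrable_iff.2 ((hf (min a b)).mono_set fun _ hx => hx.1)).neg
  integral_eq_sub a b := by
    rw [intervalIntegral.integral_neg, ← intervalIntegral.integral_interval_add_Ioi (hf a) (hf b)]
    abel

lemma eq_of_deriv_eq_zero (hF : IsPrimitive F fun _ => 0) (a b : ℝ) : F a = F b := by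
  simpa only [intervalIntegral.integral_zero, eq_comm, sub_eq_zero] using hF.integral_eq_sub a b

variable [CompleteSpace E]

lemma of_hasDerivAt (h : ∀ x, HasDerivAt F (f x) x) (hf : Continuous f) : IsPrimitive F f where
  intervalIntegrable a b := hf.intervalIntegrable a b
  integral_eq_sub a b :=
    intervalIntegral.integral_eq_sub_of_hasDerivAt (fun x _ => h x) (hf.intervalIntegrable a b)

lemma hasDerivAt (hF : IsPrimitive F f) (hf : Continuous f) (x : ℝ) : HasDerivAt F (f x) x := by
  rw [hF.eq_add_integral 0]
  exact (hf.integral_hasStrictDerivAt 0 x).hasDerivAt.const_add _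

lemma ae_hasDerivAt (hF : IsPrimitive F f) : ∀ᵐ x, HasDerivAt F (f x) x := by
  have hf := locallyIntegrable_of_forall_intervalIntegrable hF.intervalIntegrable
  filter_upwards [LocallyIntegrable.ae_hasDerivAt_integral hf] with x hx
  rw [hF.eq_add_integral 0]
  exact (hx 0).const_add _

lemma of_ae_hasDerivAt (hF : ∀ a b, AbsolutelyContinuousOnInterval F a b)
    (hf : ∀ a b, IntervalIntegrable f volume a b) (h : ∀ᵐ x, HasDerivAt F (f x) x) :
    IsPrimitive F f := by
  refine ⟨hf, fun a b => ?_⟩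
  have hP := IsPrimitive.integral hf a
  obtain ⟨C, hC⟩ := ((hF a b).fun_sub
      (hP.absolutelyContinuousOnInterval a b)).const_of_ae_hasDerivAt_zero (by
    filter_upwards [h, hP.ae_hasDerivAt] with x hFx hPx _
    simpa only [sub_self] using hFx.fun_sub hPx)
  have hab := (hC a left_mem_uIcc).trans (hC b right_mem_uIcc).symm
  rw [intervalIntegral.integral_same, sub_zero] at hab
  rw [hab, sub_sub_cancel]

lemma contDiff_comp {φ : ℝ → E} {H h : ℝ → ℝ} (hφ : ContDiff ℝ 1 φ) (hH : IsPrimitive H h) :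
    IsPrimitive (fun x => φ (H x)) (fun x => h x • deriv φ (H x)) := by
  refine of_ae_hasDerivAt (fun a b => ?_) (fun a b => ?_) ?_
  · obtain ⟨K, hK⟩ := hφ.locallyLipschitz.locallyLipschitzOn.exists_lipschitzOnWith_of_compact
      (isCompact_uIcc.image (s := uIcc a b) hH.continuous)
    refine absolutelyContinuousOnInterval_of_dist_le
      ((hH.absolutelyContinuousOnInterval a b).const_smul (K : ℝ)) fun x hx y hy => ?_
    rw [dist_smul₀, Real.norm_of_nonneg K.coe_nonneg]
    exact hK.dist_le_mul _ (mem_image_of_mem H hx) _ (mem_image_of_mem H hy)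
  · exact (hH.intervalIntegrable a b).smul_continuousOn
      ((hφ.continuous_deriv le_rfl).comp hH.continuous).continuousOn
  · filter_upwards [hH.ae_hasDerivAt] with x hx
    exact (hφ.differentiable one_ne_zero (H x)).hasDerivAt.scomp x hx

variable {𝕜 : Type*} [NormedField 𝕜] [NormedAlgebra ℝ 𝕜] {P Q p q : ℝ → 𝕜}

protected lemma const_mul (c : 𝕜) (hP : IsPrimitive P p) :
    IsPrimitive (fun x => c * P x) (fun x => c * p x) where
  intervalIntegrable a b := (hP.intervalIntegrable a b).const_mul c
  integral_eq_sub a b := by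
    rw [intervalIntegral.integral_const_mul, hP.integral_eq_sub, mul_sub]

protected lemma mul [CompleteSpace 𝕜] (hP : IsPrimitive P p) (hQ : IsPrimitive Q q) :
    IsPrimitive (fun x => P x * Q x) (fun x => p x * Q x + P x * q x) := by
  refine of_ae_hasDerivAt (fun a b => ?_) (fun a b => ?_) ?_
  · exact (hP.absolutelyContinuousOnInterval a b).fun_smul (hQ.absolutelyContinuousOnInterval a b)
  · exact ((hP.intervalIntegrable a b).mul_continuousOn hQ.continuous.continuousOn).add
      ((hQ.intervalIntegrable a b).continuousOn_mul hP.continuous.continuousOn)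
  · filter_upwards [hP.ae_hasDerivAt, hQ.ae_hasDerivAt] with x hPx hQx
    exact hPx.mul hQx

end IsPrimitive

end Primitive

section Volterra

open Set BoundedContinuousFunction

lemma exists_weight_integral_Ioi_mul_le {h : ℝ → ℝ} (h_nonneg : ∀ x, 0 ≤ h x)
    (h_int : Integrable h) :
    ∃ p : ℝ →ᵇ ℝ, (∀ x, 1 ≤ p x) ∧ ∀ x, ∫ t in Ioi x, h t * p t ≤ p x / 2 := by
  -- `p = exp (2 ∫_x^∞ h)` satisfies `p' = -2 h p`.
  set H : ℝ → ℝ := fun x => ∫ t in Ioi x, h t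
  have hH : IsPrimitive H fun x => -h x := IsPrimitive.integral_Ioi fun _ => h_int.integrableOn
  have hp : IsPrimitive (fun x => Real.exp (2 * H x)) fun x => -2 * (h x * Real.exp (2 * H x)) :=
    (hH.contDiff_comp (φ := fun s => Real.exp (2 * s)) (by fun_prop)).congr_deriv fun x => by
      rw [((hasDerivAt_const_mul (x := H x) 2).exp).deriv, smul_eq_mul]
      ring
  have hH_nonneg : ∀ x, 0 ≤ H x := fun x =>
    setIntegral_nonneg measurableSet_Ioi fun t _ => h_nonneg t
  have hp_norm : ∀ x, ‖Real.exp (2 * H x)‖ ≤ Real.exp (2 * ∫ t, h t) := fun x => by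
    rw [Real.norm_of_nonneg (Real.exp_pos _).le]
    gcongr
    exact setIntegral_le_integral h_int (Eventually.of_forall h_nonneg)
  have hp_int : Integrable fun x => h x * Real.exp (2 * H x) :=
    h_int.mul_bdd hp.continuous.aestronglyMeasurable (Eventually.of_forall hp_norm)
  refine ⟨.ofNormedAddCommGroup _ hp.continuous _ hp_norm,
    fun x => Real.one_le_exp (mul_nonneg zero_le_two (hH_nonneg x)), fun x => ?_⟩
  refine le_of_tendsto (intervalIntegral_tendsto_integral_Ioi x hp_int.integrableOn tendsto_id)
    (Eventually.of_forall fun y => ?_)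
  have hxy := hp.integral_eq_sub x y
  rw [intervalIntegral.integral_const_mul] at hxy
  rw [id, coe_ofNormedAddCommGroup]
  linarith [Real.exp_pos (2 * H y)]

lemma exists_isFixedPt_of_weighted_contraction {X E : Type*} [TopologicalSpace X]
    [NormedAddCommGroup E] [NormedSpace ℝ E] [CompleteSpace E] {T : (X →ᵇ E) → X →ᵇ E}
    {θ : NNReal} (hθ : θ < 1) {p : X →ᵇ ℝ} (hp_one_le : ∀ x, 1 ≤ p x)
    (hT : ∀ g₁ g₂ C, 0 ≤ C → (∀ x, dist (g₁ x) (g₂ x) ≤ C * p x) →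
      ∀ x, dist (T g₁ x) (T g₂ x) ≤ θ * C * p x) :
    ∃ m, Function.IsFixedPt T m := by
  have hp_pos : ∀ x, 0 < p x := fun x => zero_lt_one.trans_le (hp_one_le x)
  have hp_inv : ∀ x, ‖(p x)⁻¹‖ = (p x)⁻¹ := fun x =>
    Real.norm_of_nonneg (inv_nonneg.2 (hp_pos x).le)
  let pinv : X →ᵇ ℝ := .ofNormedAddCommGroup (fun x => (p x)⁻¹)
    (p.continuous.inv₀ fun x => (hp_pos x).ne') 1 fun x =>
      (hp_inv x).trans_le (inv_le_one_of_one_le₀ (hp_one_le x))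
  set S : (X →ᵇ E) → X →ᵇ E := fun g => pinv • T (p • g)
  have hS_apply : ∀ g x, S g x = (p x)⁻¹ • T (p • g) x := fun _ _ => rfl
  have hS : ContractingWith θ S := by
    refine ⟨hθ, LipschitzWith.of_dist_le_mul fun g₁ g₂ => (dist_le (by positivity)).2 fun x => ?_⟩
    have hT_sub := hT (p • g₁) (p • g₂) (dist g₁ g₂) dist_nonneg (fun t => by
      calc dist (p t • g₁ t) (p t • g₂ t) = dist (g₁ t) (g₂ t) * p t := by
            rw [dist_smul₀, Real.norm_of_nonneg (hp_pos t).le, mul_comm]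
        _ ≤ dist g₁ g₂ * p t := mul_le_mul_of_nonneg_right (dist_coe_le_dist t) (hp_pos t).le) x
    rw [hS_apply, hS_apply, dist_smul₀, hp_inv]
    exact (inv_mul_le_iff₀' (hp_pos x)).2 hT_sub
  obtain ⟨g, hg⟩ : ∃ g, S g = g := ⟨_, hS.fixedPoint_isFixedPt⟩
  refine ⟨p • g, ext fun x => ?_⟩
  calc T (p • g) x = p x • S g x := by rw [hS_apply, smul_inv_smul₀ (hp_pos x).ne']
    _ = p x • g x := by rw [hg]

variable {A : Type*} [NormedRing A] {K : ℝ → ℝ → A} {h : ℝ → ℝ}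

lemma integrableOn_Ioi_mul (hK : ∀ x, AEStronglyMeasurable (K x))
    (hKh : ∀ x t, x < t → ‖K x t‖ ≤ h t) (h_int : Integrable h) (g : ℝ →ᵇ A) (x : ℝ) :
    IntegrableOn (fun t => K x t * g t) (Ioi x) := by
  refine Integrable.mul_bdd (c := ‖g‖) (h_int.integrableOn.mono' (hK x).restrict ?_)
    g.continuous.aestronglyMeasurable (Eventually.of_forall g.norm_coe_le_norm)
  exact (ae_restrict_mem measurableSet_Ioi).mono fun t => hKh x t

variable [NormedAlgebra ℝ A]

lemma norm_integral_Ioi_mul_le (hKh : ∀ x t, x < t → ‖K x t‖ ≤ h t) (h_int : Integrable h)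
    {g : ℝ → A} {C : ℝ} (p : ℝ →ᵇ ℝ) (hg : ∀ t, ‖g t‖ ≤ C * p t) (x : ℝ) :
    ‖∫ t in Ioi x, K x t * g t‖ ≤ C * ∫ t in Ioi x, h t * p t := by
  rw [← integral_const_mul]
  refine norm_integral_le_of_norm_le (((h_int.mul_bdd p.continuous.aestronglyMeasurable
    (Eventually.of_forall p.norm_coe_le_norm)).const_mul C).integrableOn) ?_
  filter_upwards [ae_restrict_mem measurableSet_Ioi] with t ht
  calc ‖K x t * g t‖ ≤ h t * (C * p t) := norm_mul_le_of_le (hKh x t ht) (hg t)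
    _ = C * (h t * p t) := mul_left_comm _ _ _

lemma norm_integral_Ioi_mul_le_norm_mul (hKh : ∀ x t, x < t → ‖K x t‖ ≤ h t)
    (h_int : Integrable h) (g : ℝ →ᵇ A) (x : ℝ) :
    ‖∫ t in Ioi x, K x t * g t‖ ≤ ‖g‖ * ∫ t in Ioi x, h t := by
  simpa only [const_apply, mul_one] using norm_integral_Ioi_mul_le hKh h_int (C := ‖g‖) (const ℝ 1)
    (fun t => (g.norm_coe_le_norm t).trans_eq (mul_one _).symm) x

lemma tendsto_integral_Ioi_mul_atTop (hKh : ∀ x t, x < t → ‖K x t‖ ≤ h t)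
    (h_int : Integrable h) (g : ℝ →ᵇ A) :
    Tendsto (fun x => ∫ t in Ioi x, K x t * g t) atTop (𝓝 0) := by
  refine squeeze_zero_norm (norm_integral_Ioi_mul_le_norm_mul hKh h_int g) ?_
  rw [← mul_zero ‖g‖]
  exact (tendsto_integral_Ioi_zero tendsto_id).const_mul _

lemma continuous_integral_Ioi_mul (hK : ∀ x, AEStronglyMeasurable (K x))
    (hK_cont : ∀ t, Continuous fun x => K x t) (hKh : ∀ x t, x < t → ‖K x t‖ ≤ h t)
    (h_int : Integrable h) (g : ℝ →ᵇ A) :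
    Continuous fun x => ∫ t in Ioi x, K x t * g t := by
  refine continuous_iff_continuousAt.2 fun x₀ => ?_
  simp only [← integral_indicator measurableSet_Ioi]
  refine continuousAt_of_dominated (bound := fun t => h t * ‖g‖)
    (Eventually.of_forall fun x =>
      ((hK x).mul g.continuous.aestronglyMeasurable).indicator measurableSet_Ioi)
    (Eventually.of_forall fun x => Eventually.of_forall fun t => ?_) (h_int.mul_const _) ?_
  · have h_nonneg : 0 ≤ h t := (norm_nonneg _).trans (hKh (t - 1) t (sub_one_lt t))
    by_cases ht : t ∈ Ioi x
    · rw [indicator_of_mem ht]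
      exact norm_mul_le_of_le (hKh x t ht) (g.norm_coe_le_norm t)
    · rw [indicator_of_notMem ht, norm_zero]
      exact mul_nonneg h_nonneg (norm_nonneg _)
  · filter_upwards [Measure.ae_ne volume x₀] with t ht
    rcases lt_or_gt_of_ne ht with h_lt | h_gt
    · refine continuousAt_const.congr (f := fun _ => 0) ?_
      filter_upwards [Ioi_mem_nhds h_lt] with x hx
      rw [indicator_of_notMem (notMem_Ioi.2 (le_of_lt hx))]
    · refine ((hK_cont t).mul (continuous_const (y := g t))).continuousAt.congr ?_
      filter_upwards [Iio_mem_nhds h_gt] with x hx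
      rw [indicator_of_mem (mem_Ioi.2 hx)]
      rfl

lemma exists_boundedContinuousFunction_eq_integral_Ioi_mul (hK : ∀ x, AEStronglyMeasurable (K x))
    (hK_cont : ∀ t, Continuous fun x => K x t) (hKh : ∀ x t, x < t → ‖K x t‖ ≤ h t)
    (h_int : Integrable h) (g : ℝ →ᵇ A) :
    ∃ Tg : ℝ →ᵇ A, ∀ x, Tg x = ∫ t in Ioi x, K x t * g t := by
  have h_nonneg : ∀ t, 0 ≤ h t := fun t => (norm_nonneg _).trans (hKh (t - 1) t (sub_one_lt t))
  refine ⟨.ofNormedAddCommGroup _ (continuous_integral_Ioi_mul hK hK_cont hKh h_int g)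
    (‖g‖ * ∫ t, h t) fun x => ?_, fun _ => rfl⟩
  exact (norm_integral_Ioi_mul_le_norm_mul hKh h_int g x).trans <| mul_le_mul_of_nonneg_left
    (setIntegral_le_integral h_int (Eventually.of_forall h_nonneg)) (norm_nonneg g)

lemma norm_integral_Ioi_mul_sub_le (hK : ∀ x, AEStronglyMeasurable (K x))
    (hKh : ∀ x t, x < t → ‖K x t‖ ≤ h t) (h_int : Integrable h) {g₁ g₂ : ℝ →ᵇ A} {C : ℝ}
    (p : ℝ →ᵇ ℝ) (hg : ∀ t, ‖g₁ t - g₂ t‖ ≤ C * p t) (x : ℝ) :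
    ‖(∫ t in Ioi x, K x t * g₁ t) - ∫ t in Ioi x, K x t * g₂ t‖ ≤
      C * ∫ t in Ioi x, h t * p t := by
  rw [← integral_sub (integrableOn_Ioi_mul hK hKh h_int g₁ x)
    (integrableOn_Ioi_mul hK hKh h_int g₂ x)]
  simp only [← mul_sub]
  exact norm_integral_Ioi_mul_le hKh h_int p hg x

theorem exists_eq_add_integral_Ioi_mul [CompleteSpace A] (hK : ∀ x, AEStronglyMeasurable (K x))
    (hK_cont : ∀ t, Continuous fun x => K x t) (hKh : ∀ x t, x < t → ‖K x t‖ ≤ h t)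
    (h_int : Integrable h) (f : ℝ →ᵇ A) :
    ∃ m : ℝ →ᵇ A, ∀ x, m x = f x + ∫ t in Ioi x, K x t * m t := by
  have h_nonneg : ∀ t, 0 ≤ h t := fun t => (norm_nonneg _).trans (hKh (t - 1) t (sub_one_lt t))
  obtain ⟨p, hp_one_le, hp⟩ := exists_weight_integral_Ioi_mul_le h_nonneg h_int
  choose T hT using exists_boundedContinuousFunction_eq_integral_Ioi_mul hK hK_cont hKh h_int
  obtain ⟨m, hm⟩ := exists_isFixedPt_of_weighted_contraction (T := fun g => f + T g) (θ := 1 / 2)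
    (by norm_num) hp_one_le fun g₁ g₂ C hC hg x => by
      calc dist (f x + T g₁ x) (f x + T g₂ x) = ‖T g₁ x - T g₂ x‖ := by
            rw [dist_add_left, dist_eq_norm]
        _ ≤ C * ∫ t in Ioi x, h t * p t := by
            rw [hT, hT]
            exact norm_integral_Ioi_mul_sub_le hK hKh h_int p
              (fun t => (dist_eq_norm _ _).symm.trans_le (hg t)) x
        _ ≤ C * (p x / 2) := mul_le_mul_of_nonneg_left (hp x) hC
        _ = (1 / 2 : NNReal) * C * p x := by
            rw [NNReal.coe_div, NNReal.coe_one, NNReal.coe_two]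
            ring
  refine ⟨m, fun x => ?_⟩
  rw [← hT]
  exact (DFunLike.congr_fun hm x).symm

end Volterra

section LinearODE

variable {𝕜 : Type*} [NormedField 𝕜] [NormedAlgebra ℝ 𝕜]

/-- `u` is a Carathéodory solution of `u'' = V u`, with derivative `u' = v`. -/
structure IsSolution (V u v : ℝ → 𝕜) : Prop where
  hasDerivAt : ∀ x, HasDerivAt u (v x) x
  isPrimitive : IsPrimitive v fun x => V x * u x

namespace IsSolution

variable {V u v u₁ v₁ u₂ v₂ : ℝ → 𝕜}

protected lemma sub (h₁ : IsSolution V u₁ v₁) (h₂ : IsSolution V u₂ v₂) :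
    IsSolution V (fun x => u₁ x - u₂ x) (fun x => v₁ x - v₂ x) where
  hasDerivAt x := (h₁.hasDerivAt x).sub (h₂.hasDerivAt x)
  isPrimitive := (h₁.isPrimitive.sub h₂.isPrimitive).congr_deriv fun _ => (mul_sub _ _ _).symm

protected lemma const_mul (c : 𝕜) (h : IsSolution V u v) :
    IsSolution V (fun x => c * u x) (fun x => c * v x) where
  hasDerivAt x := (h.hasDerivAt x).const_mul c
  isPrimitive := (h.isPrimitive.const_mul c).congr_deriv fun _ => mul_left_comm _ _ _

variable [CompleteSpace 𝕜]

lemma isPrimitive_fst (h : IsSolution V u v) : IsPrimitive u v :=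
  .of_hasDerivAt h.hasDerivAt h.isPrimitive.continuous

lemma wronskian_eq (h₁ : IsSolution V u₁ v₁) (h₂ : IsSolution V u₂ v₂) (x y : ℝ) :
    u₁ x * v₂ x - v₁ x * u₂ x = u₁ y * v₂ y - v₁ y * u₂ y :=
  (((h₁.isPrimitive_fst.mul h₂.isPrimitive).sub (h₁.isPrimitive.mul h₂.isPrimitive_fst)).congr_deriv
    (g := fun _ => 0) fun x => by ring).eq_of_deriv_eq_zero x y

lemma eq_zero (hV : ∀ a b, IntervalIntegrable V volume a b) (h : IsSolution V u v) {x₀ : ℝ}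
    (hu : u x₀ = 0) (hv : v x₀ = 0) (x : ℝ) : u x = 0 := by
  refine congrArg Prod.fst ((h.isPrimitive_fst.prodMk h.isPrimitive).eq_zero_of_norm_le
    (a := fun x => 1 + ‖V x‖) (fun x => by positivity)
    (fun a b => intervalIntegrable_const.add (hV a b).norm) (fun x => ?_) (Prod.ext hu hv) x)
  refine max_le ?_ ?_
  · calc ‖v x‖ = 1 * ‖v x‖ := (one_mul _).symm
      _ ≤ (1 + ‖V x‖) * ‖(u x, v x)‖ := by
          gcongr
          exacts [le_add_of_nonneg_right (norm_nonneg _), le_max_right _ _]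
  · calc ‖V x * u x‖ = ‖V x‖ * ‖u x‖ := norm_mul _ _
      _ ≤ (1 + ‖V x‖) * ‖(u x, v x)‖ := by
          gcongr
          exacts [le_add_of_nonneg_left zero_le_one, le_max_left _ _]

lemma exists_eq_const_mul_of_wronskian_eq_zero (hV : ∀ a b, IntervalIntegrable V volume a b)
    (h₁ : IsSolution V u₁ v₁) (h₂ : IsSolution V u₂ v₂) {x₀ : ℝ} (hx₀ : u₁ x₀ ≠ 0)
    (hW : u₁ x₀ * v₂ x₀ - v₁ x₀ * u₂ x₀ = 0) : ∃ c : 𝕜, ∀ x, u₂ x = c * u₁ x := by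
  refine ⟨u₂ x₀ / u₁ x₀, fun x => sub_eq_zero.1 ?_⟩
  refine (h₂.sub (h₁.const_mul _)).eq_zero hV (x₀ := x₀) ?_ ?_ x
  · rw [div_mul_cancel₀ _ hx₀, sub_self]
  · field_simp
    linear_combination hW

end IsSolution

end LinearODE

section Jost

open Complex Set

lemma eq_zero_of_tendsto_deriv_atTop {E : Type*} [NormedAddCommGroup E] [NormedSpace ℝ E]
    {g g' : ℝ → E} {L W : E} (hg : ∀ᶠ x in atTop, HasDerivAt g (g' x) x)
    (hgL : Tendsto g atTop (𝓝 L)) (hgW : Tendsto g' atTop (𝓝 W)) : W = 0 := by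
  have hdiff : Tendsto (fun x => g (x + 1) - g x) atTop (𝓝 0) := by
    have := (hgL.comp (tendsto_atTop_add_const_right _ 1 tendsto_id)).sub hgL
    rwa [sub_self] at this
  refine tendsto_nhds_unique (Metric.tendsto_nhds.2 fun ε hε => ?_) hdiff
  have hW : ∀ᶠ x in atTop, ‖g' x - W‖ ≤ ε / 2 := by
    filter_upwards [Metric.tendsto_nhds.1 hgW (ε / 2) (half_pos hε)] with x hx
    rw [← dist_eq_norm]
    exact hx.le
  filter_upwards [eventually_forall_ge_atTop.2 (hg.and hW)] with x hx
  have hmvt := (convex_Icc x (x + 1)).norm_image_sub_le_of_norm_hasDerivWithin_le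
    (f := fun y => g y - y • W) (f' := fun y => g' y - (1 : ℝ) • W)
    (fun y hy => ((hx y hy.1).1.sub ((hasDerivAt_id y).smul_const W)).hasDerivWithinAt)
    (fun y hy => by simpa only [one_smul] using (hx y hy.1).2)
    (left_mem_Icc.2 (lt_add_one x).le) (right_mem_Icc.2 (lt_add_one x).le)
  rw [add_sub_cancel_left, norm_one, mul_one, sub_sub_sub_comm, add_smul, one_smul,
    add_sub_cancel_left] at hmvt
  rw [dist_eq_norm]
  exact hmvt.trans_lt (half_lt_self hε)

lemma hasDerivAt_cexp_const_mul_ofReal (β : ℂ) (x : ℝ) :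
    HasDerivAt (fun x : ℝ => cexp (β * x)) (β * cexp (β * x)) x := by
  simpa only [id, ofReal_one, mul_one, mul_comm] using
    ((hasDerivAt_id x).ofReal_comp.const_mul β).cexp

lemma cexp_mul_cexp_neg (a : ℂ) : cexp a * cexp (-a) = 1 := by
  rw [← Complex.exp_add, add_neg_cancel, Complex.exp_zero]

lemma re_two_mul_nonpos {β : ℂ} (hβ : β.re ≤ 0) : (2 * β).re ≤ 0 := by
  rw [two_mul, add_re]
  exact add_nonpos hβ hβ

lemma norm_cexp_mul_ofReal_le {β : ℂ} (hβ : β.re ≤ 0) {a x : ℝ} (hax : a ≤ x) :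
    ‖cexp (β * x)‖ ≤ Real.exp (β.re * a) := by
  rw [norm_exp, re_mul_ofReal]
  exact Real.exp_le_exp.2 (mul_le_mul_of_nonpos_left hax hβ)

lemma norm_cexp_two_mul_ofReal_le_one {β : ℂ} (hβ : β.re ≤ 0) {x : ℝ} (hx : 0 ≤ x) :
    ‖cexp (2 * β * x)‖ ≤ 1 := by
  simpa only [mul_zero, Real.exp_zero] using
    norm_cexp_mul_ofReal_le (re_two_mul_nonpos hβ) hx

variable {β : ℂ} {V u v w z : ℝ → ℂ}

namespace IsSolution

lemma wronskian_eq_zero_of_tendsto (hβ : β.re ≤ 0) (hu : IsSolution V u v) (hw : IsSolution V w z)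
    (hu_lim : Tendsto (fun x : ℝ => cexp (-(β * x)) * u x) atTop (𝓝 1))
    (hw_lim : Tendsto (fun x : ℝ => cexp (-(β * x)) * w x) atTop (𝓝 0)) (x : ℝ) :
    u x * z x - v x * w x = 0 := by
  set W := u x * z x - v x * w x
  have hW : ∀ y, u y * z y - v y * w y = W := fun y => hu.wronskian_eq hw y x
  have hu_ne : ∀ᶠ y in atTop, u y ≠ 0 :=
    (hu_lim.eventually_ne one_ne_zero).mono fun y => right_ne_zero_of_mul
  -- `g = e^{2βx} w / u` tends to `0`, while `g' = 2βg + W / (e^{-βx} u)²` tends to `W`.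
  set g : ℝ → ℂ := fun y => cexp (2 * β * y) * (w y / u y)
  have hg_deriv : ∀ᶠ y in atTop,
      HasDerivAt g (2 * β * g y + W / (cexp (-(β * y)) * u y) ^ 2) y := by
    filter_upwards [hu_ne] with y hy
    refine ((hasDerivAt_cexp_const_mul_ofReal (2 * β) y).fun_mul
      ((hw.hasDerivAt y).fun_div (hu.hasDerivAt y) hy)).congr_deriv ?_
    have hexp : cexp (2 * β * y) * cexp (-(β * y)) ^ 2 = 1 := by
      rw [← exp_nat_mul, ← Complex.exp_add, ← Complex.exp_zero]
      ring_nf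
    have hexp_ne : cexp (-(β * y)) ≠ 0 := exp_ne_zero _
    rw [← hW y]
    simp only [g]
    field_simp
    linear_combination (u y * z y - v y * w y) * hexp
  have hg_lim : Tendsto g atTop (𝓝 0) := by
    have hratio : Tendsto (fun y => w y / u y) atTop (𝓝 0) := by
      have := hw_lim.div hu_lim one_ne_zero
      rw [zero_div] at this
      exact this.congr fun y => mul_div_mul_left _ _ (exp_ne_zero _)
    refine squeeze_zero_norm' ?_ (tendsto_zero_iff_norm_tendsto_zero.1 hratio)
    filter_upwards [eventually_ge_atTop 0] with y hy
    rw [norm_mul]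
    exact mul_le_of_le_one_left (norm_nonneg _) (norm_cexp_two_mul_ofReal_le_one hβ hy)
  refine eq_zero_of_tendsto_deriv_atTop hg_deriv hg_lim ?_
  have h_lim := (hg_lim.const_mul (2 * β)).add
    ((tendsto_const_nhds (x := W)).div (hu_lim.pow 2) (pow_ne_zero 2 one_ne_zero))
  rwa [mul_zero, one_pow, div_one, zero_add] at h_lim

theorem eq_of_tendsto_cexp_mul (hβ : β.re ≤ 0) (hV : ∀ a b, IntervalIntegrable V volume a b)
    (hu : IsSolution V u v) (hw : IsSolution V w z)
    (hu_lim : Tendsto (fun x : ℝ => cexp (-(β * x)) * u x) atTop (𝓝 1))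
    (hw_lim : Tendsto (fun x : ℝ => cexp (-(β * x)) * w x) atTop (𝓝 1)) : w = u := by
  have hdiff_lim : Tendsto (fun x : ℝ => cexp (-(β * x)) * (w x - u x)) atTop (𝓝 0) := by
    simpa only [mul_sub, sub_self] using hw_lim.sub hu_lim
  obtain ⟨x₀, hx₀⟩ := (hu_lim.eventually_ne one_ne_zero).exists
  obtain ⟨a, ha⟩ := hu.exists_eq_const_mul_of_wronskian_eq_zero hV (hw.sub hu)
    (right_ne_zero_of_mul hx₀) (hu.wronskian_eq_zero_of_tendsto hβ (hw.sub hu) hu_lim hdiff_lim x₀)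
  have ha_zero : a = 0 := by
    refine tendsto_nhds_unique ?_ hdiff_lim
    simpa only [ha, mul_one, mul_left_comm] using hu_lim.const_mul a
  funext x
  rw [← sub_eq_zero, ha, ha_zero, zero_mul]

end IsSolution

variable {ρ F G : ℝ → ℂ}

lemma isSolution_of_variation_of_constants
    (hF : IsPrimitive F fun x => -(cexp (β * x) * (ρ x * u x)))
    (hG : IsPrimitive G fun x => -(cexp (-(β * x)) * (ρ x * u x)))
    (hu : ∀ x, u x = cexp (β * x) - β / 2 * (cexp (-(β * x)) * F x - cexp (β * x) * G x)) :
    IsSolution (fun x => β ^ 2 * (1 - ρ x)) u fun x =>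
      β * cexp (β * x) + β ^ 2 / 2 * (cexp (-(β * x)) * F x + cexp (β * x) * G x) := by
  have hP : IsPrimitive (fun x : ℝ => cexp (β * x)) fun x => β * cexp (β * x) :=
    .of_hasDerivAt (hasDerivAt_cexp_const_mul_ofReal β) (by fun_prop)
  have hN : IsPrimitive (fun x : ℝ => cexp (-(β * x))) fun x => -β * cexp (-(β * x)) :=
    .of_hasDerivAt (fun x => by
      simpa only [neg_mul] using hasDerivAt_cexp_const_mul_ofReal (-β) x) (by fun_prop)
  have hv := ((hP.const_mul β).add (((hN.mul hF).add (hP.mul hG)).const_mul (β ^ 2 / 2)))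
  refine ⟨fun x => ?_, hv.congr_deriv fun x => ?_⟩
  · rw [funext hu]
    refine ((hP.sub (((hN.mul hF).sub (hP.mul hG)).const_mul (β / 2))).congr_deriv
      fun y => ?_).hasDerivAt hv.continuous x
    ring
  · linear_combination (-β ^ 2 * (ρ x * u x)) * cexp_mul_cexp_neg (β * x) - β ^ 2 * hu x

/-- The kernel of the integral equation for `m x = e^{-βx} u x`, where `u'' = β² (1 - ρ) u` and
`u x ~ e^{βx}` at `+∞`. The factor `β / 2` is the `β² / (2β)` of variation of constants, cancelled
so that `β = 0` needs no separate treatment. -/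
def jostKernel (β : ℂ) (ρ : ℝ → ℂ) (x t : ℝ) : ℂ :=
  β / 2 * (1 - cexp (2 * β * ((t - x : ℝ) : ℂ))) * ρ t

lemma cexp_mul_jostKernel (β : ℂ) (ρ : ℝ → ℂ) (x t : ℝ) (a : ℂ) :
    cexp (β * x) * (jostKernel β ρ x t * a) =
      -(β / 2) * (cexp (-(β * x)) * (cexp (β * t) * (ρ t * (cexp (β * t) * a))) -
        cexp (β * x) * (cexp (-(β * t)) * (ρ t * (cexp (β * t) * a)))) := by
  have hsplit : cexp (2 * β * ((t - x : ℝ) : ℂ)) = cexp (β * t) ^ 2 * cexp (-(β * x)) ^ 2 := by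
    rw [← exp_nat_mul, ← exp_nat_mul, ← Complex.exp_add]
    push_cast
    ring_nf
  have hx : cexp (β * x) * cexp (-(β * x)) = 1 := cexp_mul_cexp_neg _
  have ht : cexp (β * t) * cexp (-(β * t)) = 1 := cexp_mul_cexp_neg _
  rw [jostKernel, hsplit]
  linear_combination (-β / 2 * ρ t * a * cexp (β * t) ^ 2 * cexp (-(β * x))) * hx -
    (β / 2 * ρ t * a * cexp (β * x)) * ht

lemma norm_jostKernel_le (hβ : β.re ≤ 0) {x t : ℝ} (hxt : x < t) :
    ‖jostKernel β ρ x t‖ ≤ ‖β‖ * ‖ρ t‖ := by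
  calc ‖jostKernel β ρ x t‖ = ‖β‖ / 2 * ‖1 - cexp (2 * β * ((t - x : ℝ) : ℂ))‖ * ‖ρ t‖ := by
        rw [jostKernel, norm_mul, norm_mul, norm_div, norm_ofNat]
    _ ≤ ‖β‖ / 2 * (1 + 1) * ‖ρ t‖ := by
        gcongr
        exact norm_sub_le_of_le norm_one.le
          (norm_cexp_two_mul_ofReal_le_one hβ (sub_nonneg.2 hxt.le))
    _ = ‖β‖ * ‖ρ t‖ := by ring

lemma exists_jost_factor (hβ : β.re ≤ 0) (hρ : Integrable ρ) :
    ∃ m : BoundedContinuousFunction ℝ ℂ, (∀ x, m x = 1 + ∫ t in Ioi x, jostKernel β ρ x t * m t) ∧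
      Tendsto m atTop (𝓝 1) := by
  have hK_le : ∀ x t, x < t → ‖jostKernel β ρ x t‖ ≤ ‖β‖ * ‖ρ t‖ := fun _ _ =>
    norm_jostKernel_le hβ
  have hρ_int : Integrable fun t => ‖β‖ * ‖ρ t‖ := hρ.norm.const_mul _
  obtain ⟨m, hm⟩ := exists_eq_add_integral_Ioi_mul (K := jostKernel β ρ)
    (fun x => (by fun_prop : Continuous fun t : ℝ =>
      β / 2 * (1 - cexp (2 * β * ((t - x : ℝ) : ℂ)))).aestronglyMeasurable.mul
        hρ.aestronglyMeasurable)
    (fun t => by unfold jostKernel; fun_prop) hK_le hρ_int (.const ℝ 1)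
  refine ⟨m, hm, ?_⟩
  have hm_lim := (tendsto_integral_Ioi_mul_atTop hK_le hρ_int m).const_add 1
  rw [add_zero] at hm_lim
  exact hm_lim.congr fun x => (hm x).symm

lemma exists_isSolution_tendsto_cexp_mul (hβ : β.re ≤ 0) (hρ : Integrable ρ) :
    ∃ u v, IsSolution (fun x => β ^ 2 * (1 - ρ x)) u v ∧
      Tendsto (fun x : ℝ => cexp (-(β * x)) * u x) atTop (𝓝 1) := by
  obtain ⟨m, hm, hm_lim⟩ := exists_jost_factor hβ hρ
  set u : ℝ → ℂ := fun x => cexp (β * x) * m x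
  have hρm : Integrable fun t => ρ t * m t := hρ.mul_bdd m.continuous.aestronglyMeasurable
    (Eventually.of_forall m.norm_coe_le_norm)
  have hN_int : ∀ a, IntegrableOn (fun t : ℝ => cexp (-(β * t)) * (ρ t * u t)) (Ioi a) := by
    refine fun a => hρm.integrableOn.congr_fun (fun t _ => ?_) measurableSet_Ioi
    linear_combination (-ρ t * m t) * cexp_mul_cexp_neg (β * t)
  have hP_int : ∀ a, IntegrableOn (fun t : ℝ => cexp (β * t) * (ρ t * u t)) (Ioi a) := by
    refine fun a => IntegrableOn.congr_fun (f := fun t : ℝ => cexp (2 * β * t) * (ρ t * m t))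
      (hρm.integrableOn.bdd_mul (c := Real.exp ((2 * β).re * a)) ?_ ?_) (fun t _ => ?_)
      measurableSet_Ioi
    · exact (by fun_prop : Continuous fun t : ℝ => cexp (2 * β * t)).aestronglyMeasurable
    · filter_upwards [ae_restrict_mem measurableSet_Ioi] with t ht
      exact norm_cexp_mul_ofReal_le (re_two_mul_nonpos hβ) (le_of_lt ht)
    · have hexp : cexp (2 * β * t) = cexp (β * t) ^ 2 := by
        rw [← exp_nat_mul]
        ring_nf
      simp only [hexp, u]
      ring
  refine ⟨u, _, isSolution_of_variation_of_constants (IsPrimitive.integral_Ioi hP_int)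
    (IsPrimitive.integral_Ioi hN_int) fun x => ?_, hm_lim.congr fun x => ?_⟩
  · calc u x = cexp (β * x) + ∫ t in Ioi x, cexp (β * x) * (jostKernel β ρ x t * m t) := by
          rw [integral_const_mul, ← mul_one_add (cexp (β * x)), ← hm x]
      _ = cexp (β * x) - β / 2 *
            (cexp (-(β * x)) * (∫ t in Ioi x, cexp (β * t) * (ρ t * u t)) -
              cexp (β * x) * ∫ t in Ioi x, cexp (-(β * t)) * (ρ t * u t)) := by
          simp only [cexp_mul_jostKernel, integral_const_mul]
          rw [integral_sub ((hP_int x).const_mul _) ((hN_int x).const_mul _),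
            integral_const_mul, integral_const_mul, neg_mul, ← sub_eq_add_neg]
  · linear_combination (-m x) * cexp_mul_cexp_neg (β * x)

end Jost

section Helmholtz

variable {c : ℝ → ℝ} {k : ℂ} {u : ℝ → ℂ}

lemma abs_qfun_le {c₀ x : ℝ} (hc₀ : 0 < c₀) (hx : c₀ < c x) :
    |qfun c x| ≤ 1 / c₀ * (1 + 1 / c₀) * |c x - 1| := by
  have hcx : 0 < c x := hc₀.trans hx
  have hinv : 1 / c x ≤ 1 / c₀ := one_div_le_one_div_of_le hc₀ hx.le
  have hfactor : qfun c x = 1 / c x * (1 + 1 / c x) * (c x - 1) := by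
    rw [qfun]
    field_simp
    ring
  rw [hfactor, abs_mul, abs_of_pos (by positivity)]
  gcongr

lemma integrable_one_add_sq_rpow {δ : ℝ} (hδ : 0 < δ) :
    Integrable fun x : ℝ => (1 + x ^ 2) ^ (-(1 + δ) / 2) := by
  simpa only [Real.norm_eq_abs, sq_abs] using
    integrable_rpow_neg_one_add_norm_sq (E := ℝ) (μ := volume) (r := 1 + δ)
      (by rw [Module.finrank_self, Nat.cast_one]; exact lt_add_of_pos_right 1 hδ)

lemma integrable_qfun (hmeas : Measurable c) (h1 : HypH1 c) (h2 : HypH2 c) :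
    Integrable (qfun c) := by
  obtain ⟨c₀, hc₀, _, _, hc⟩ := h1
  obtain ⟨C, _, δ, hδ, hdecay⟩ := h2
  refine (((integrable_one_add_sq_rpow hδ).const_mul C).const_mul (1 / c₀ * (1 + 1 / c₀))).mono'
    (measurable_const.sub (measurable_const.div (hmeas.pow_const 2))).aestronglyMeasurable ?_
  filter_upwards [hc, hdecay] with x hx hdx
  exact (abs_qfun_le hc₀ hx.1).trans (mul_le_mul_of_nonneg_left hdx (by positivity))

lemma sq_I_mul_mul_one_sub_qfun (c : ℝ → ℝ) (k : ℂ) (x : ℝ) :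
    (Complex.I * k) ^ 2 * (1 - (qfun c x : ℂ)) = -(k ^ 2 / (c x : ℂ) ^ 2) := by
  rw [mul_pow, Complex.I_sq, qfun]
  push_cast
  ring

lemma intervalIntegrable_potential (hq : Integrable (qfun c)) (k : ℂ) (a b : ℝ) :
    IntervalIntegrable (fun x => (Complex.I * k) ^ 2 * (1 - (qfun c x : ℂ))) volume a b :=
  (intervalIntegrable_const.sub hq.ofReal.intervalIntegrable).const_mul _

lemma solvesHelmholtz_iff_exists_isSolution (hq : Integrable (qfun c)) :
    SolvesHelmholtz c k u ↔
      ∃ v, IsSolution (fun x => (Complex.I * k) ^ 2 * (1 - (qfun c x : ℂ))) u v := by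
  constructor
  · rintro ⟨hu, hint⟩
    refine ⟨deriv u, fun x => (hu.differentiable one_ne_zero x).hasDerivAt,
      fun a b => (intervalIntegrable_potential hq k a b).mul_continuousOn
        hu.continuous.continuousOn,
      fun a b => ?_⟩
    simp only [sq_I_mul_mul_one_sub_qfun]
    rw [hint a b, add_sub_cancel_left]
  · rintro ⟨v, hu⟩
    have hderiv : deriv u = v := funext fun x => (hu.hasDerivAt x).deriv
    refine ⟨contDiff_one_iff_deriv.2
      ⟨fun x => (hu.hasDerivAt x).differentiableAt, hderiv ▸ hu.isPrimitive.continuous⟩,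
      fun a b => ?_⟩
    simp only [← sq_I_mul_mul_one_sub_qfun]
    rw [hderiv, hu.isPrimitive.integral_eq_sub, add_sub_cancel]

lemma existsUnique_isJostPlus (hq : Integrable (qfun c)) (hk : 0 ≤ k.im) :
    ∃! u : ℝ → ℂ, IsJostPlus c k u := by
  have hβ : (Complex.I * k).re ≤ 0 := by
    rw [Complex.I_mul_re]
    exact neg_nonpos.2 hk
  obtain ⟨u, v, hu, hu_lim⟩ := exists_isSolution_tendsto_cexp_mul hβ hq.ofReal
  refine ⟨u, ⟨(solvesHelmholtz_iff_exists_isSolution hq).2 ⟨v, hu⟩, hu_lim⟩, ?_⟩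
  rintro w ⟨hw, hw_lim⟩
  obtain ⟨z, hw⟩ := (solvesHelmholtz_iff_exists_isSolution hq).1 hw
  exact hu.eq_of_tendsto_cexp_mul hβ (intervalIntegrable_potential hq k) hw hu_lim hw_lim

lemma SolvesHelmholtz.comp_neg (h : SolvesHelmholtz c k u) :
    SolvesHelmholtz (fun x => c (-x)) k (fun x => u (-x)) := by
  refine ⟨h.1.comp contDiff_neg, fun a b => ?_⟩
  have hint := intervalIntegral.integral_comp_neg (a := a) (b := b)
    fun x => -(k ^ 2 / (c x : ℂ) ^ 2) * u x
  rw [hint, deriv_comp_neg, deriv_comp_neg, h.2 (-b) (-a)]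
  ring

lemma isJostMinus_comp_neg_iff :
    IsJostMinus c k (fun x => u (-x)) ↔ IsJostPlus (fun x => c (-x)) k u := by
  refine and_congr ⟨fun h => ?_, fun h => ?_⟩ ?_
  · simpa only [neg_neg] using h.comp_neg
  · simpa only [neg_neg] using h.comp_neg
  · rw [← map_neg_atTop, tendsto_map'_iff]
    simp only [Function.comp_def, neg_neg, Complex.ofReal_neg, mul_neg]

theorem jost_solutions_exist_unique_general (c : ℝ → ℝ) (hc : ∀ᵐ x : ℝ, c x ≠ 0)
    (hq : Integrable (qfun c)) (k : ℂ) (hk : 0 ≤ k.im) :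
    (∃! u : ℝ → ℂ, IsJostPlus c k u) ∧ (∃! u : ℝ → ℂ, IsJostMinus c k u) := by
  refine ⟨existsUnique_isJostPlus hq hk, ?_⟩
  have hneg : Function.Bijective fun (u : ℝ → ℂ) (x : ℝ) => u (-x) :=
    Function.Involutive.bijective fun u => by simp only [neg_neg]
  refine (hneg.existsUnique_iff).2 ?_
  simp only [isJostMinus_comp_neg_iff]
  exact existsUnique_isJostPlus hq.comp_neg hk

end Helmholtz

/-- Existence and uniqueness of the Jost solutions from `+∞` and from `-∞`. -/
theorem jost_solutions_exist_unique (c : ℝ → ℝ) (hmeas : Measurable c)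
    (h1 : HypH1 c) (h2 : HypH2 c) (k : ℂ) (hk : 0 ≤ k.im) :
    (∃! u : ℝ → ℂ, IsJostPlus c k u) ∧ (∃! u : ℝ → ℂ, IsJostMinus c k u) :=
  have ⟨_, hc₀, _, _, hc⟩ := h1
  jost_solutions_exist_unique_general c (hc.mono fun _ hx => (hc₀.trans hx.1).ne')
    (integrable_qfun hmeas h1 h2) k hk
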